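/- Let G be an ample groupoid with compact unit space whose dynamic asymptotic dimension is at most d. Then for every compact open subset K ⊆ G there exists a K-Lebesgue colouring of G with at most d + 1 elements. -/

import Mathlib

noncomputable section

open Function Set

attribute [local instance] Classical.propDecidable

universe u v w

/-- `ℤ[Y]`: the set of compactly supported continuous `ℤ`-valued functions on a space `Y`
(`ℤ` carries the discrete topology). -/
def ccZ (Y : Type v) [TopologicalSpace Y] : Set (Y → ℤ) :=
  {f | Continuous f ∧ HasCompactSupport f}

/-- `ℤ[Y]` as an additive subgroup of the group of all functions `Y → ℤ`. -/
def ccZSub (Y : Type v) [TopologicalSpace Y] : AddSubgroup (Y → ℤ) where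
  carrier := ccZ Y
  add_mem' {a b} ha hb := ⟨ha.1.add hb.1, ha.2.add hb.2⟩
  zero_mem' := ⟨continuous_const, by
    have h : tsupport (0 : Y → ℤ) = ∅ := by simp [tsupport]
    unfold HasCompactSupport
    rw [h]; exact isCompact_empty⟩
  neg_mem' {a} ha := ⟨ha.1.neg, ha.2.neg⟩

@[simp] lemma mem_ccZSub {Y : Type v} [TopologicalSpace Y] (f : Y → ℤ) :
    f ∈ ccZSub Y ↔ f ∈ ccZ Y := Iff.rfl

/-- The pushforward `φ_*(a)(y) = ∑_{x ∈ φ⁻¹(y)} a x` of a function along a map. -/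
def pushf {X : Type v} {Y : Type w} (φ : X → Y) (a : X → ℤ) : Y → ℤ :=
  fun y => ∑ᶠ x ∈ φ ⁻¹' {y}, a x

/-- The generated equivalence relation. -/
inductive RelGen {α : Sort*} (r : α → α → Prop) : α → α → Prop
  | rel {x y} : r x y → RelGen r x y
  | refl (x) : RelGen r x x
  | symm {x y} : RelGen r x y → RelGen r y x
  | trans {x y z} : RelGen r x y → RelGen r y z → RelGen r x z

/-- The purely algebraic data of a topological groupoid, with arrow space `G`:
the set of units, source and range maps (valued in units), a (junk-total)
partially defined composition, and inversion. -/
structure GroupoidData (G : Type u) where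
  unitSpace : Set G
  source : G → G
  range : G → G
  mul : G → G → G
  inv : G → G

namespace GroupoidData

variable {G : Type u} (D : GroupoidData G)

/-- The product of two subsets of a groupoid. -/
def setMul (A B : Set G) : Set G :=
  {w | ∃ a ∈ A, ∃ b ∈ B, D.source a = D.range b ∧ w = D.mul a b}

/-- A bisection: a subset on which both the source and the range map are injective. -/
def IsBisection (B : Set G) : Prop := Set.InjOn D.source B ∧ Set.InjOn D.range B

/-- Membership in the subgroupoid generated by a subset `A` of `G`. -/
inductive InSubgroupoid (A : Set G) : G → Prop
  | base {g} : g ∈ A → InSubgroupoid A g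
  | inv {g} : InSubgroupoid A g → InSubgroupoid A (D.inv g)
  | mul {g h} : InSubgroupoid A g → InSubgroupoid A h → D.source g = D.range h →
      InSubgroupoid A (D.mul g h)

/-- `G` is a (locally compact, Hausdorff, étale) ample groupoid: all the algebraic groupoid
axioms hold, the structure maps are suitably continuous, the source and range maps are local
homeomorphisms onto the open unit space (étaleness), and the compact open bisections form a
basis for the topology (ampleness). -/
structure IsAmpleGroupoid [TopologicalSpace G] : Prop where
  t2 : T2Space G
  locallyCompact : LocallyCompactSpace G
  source_mem : ∀ g, D.source g ∈ D.unitSpace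
  range_mem : ∀ g, D.range g ∈ D.unitSpace
  source_unit : ∀ x ∈ D.unitSpace, D.source x = x
  range_unit : ∀ x ∈ D.unitSpace, D.range x = x
  source_mul : ∀ g h, D.source g = D.range h → D.source (D.mul g h) = D.source h
  range_mul : ∀ g h, D.source g = D.range h → D.range (D.mul g h) = D.range g
  mul_assoc : ∀ g h k, D.source g = D.range h → D.source h = D.range k →
      D.mul (D.mul g h) k = D.mul g (D.mul h k)
  source_inv : ∀ g, D.source (D.inv g) = D.range g
  range_inv : ∀ g, D.range (D.inv g) = D.source g
  inv_mul : ∀ g, D.mul (D.inv g) g = D.source g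
  mul_inv : ∀ g, D.mul g (D.inv g) = D.range g
  unit_mul : ∀ g, D.mul (D.range g) g = g
  mul_unit : ∀ g, D.mul g (D.source g) = g
  continuous_inv : Continuous D.inv
  continuous_mul : Continuous fun p : {p : G × G // D.source p.1 = D.range p.2} =>
      D.mul p.1.1 p.1.2
  open_unitSpace : IsOpen D.unitSpace
  etale_source : IsLocalHomeomorph D.source
  etale_range : IsLocalHomeomorph D.range
  ample : ∀ g : G, ∀ U : Set G, IsOpen U → g ∈ U →
      ∃ B : Set G, g ∈ B ∧ B ⊆ U ∧ IsOpen B ∧ IsCompact B ∧ D.IsBisection B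

/-- A groupoid is principal if every arrow with equal range and source is a unit. -/
def IsPrincipal : Prop := ∀ g, D.source g = D.range g → g ∈ D.unitSpace

/-- `G` has dynamic asymptotic dimension at most `d`: for every relatively compact open
subset `K` of `G` there are `d+1` open subsets of the unit space covering `r(K) ∪ s(K)` such
that the subgroupoid generated by the elements of `K` with source and range in one of these
sets is relatively compact. -/
def DadLE [TopologicalSpace G] (d : ℕ) : Prop :=
  ∀ K : Set G, IsOpen K → IsCompact (closure K) →
    ∃ U : Fin (d + 1) → Set G,
      (∀ i, IsOpen (U i) ∧ U i ⊆ D.unitSpace) ∧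
      (D.range '' K ∪ D.source '' K ⊆ ⋃ i, U i) ∧
      ∀ i, IsCompact (closure
        {g | D.InSubgroupoid {g ∈ K | D.source g ∈ U i ∧ D.range g ∈ U i} g})

/-! ### Matui's complex computing the Crainic–Moerdijk groupoid homology `H_*(G)` -/

/-- The space `G^(n)` of composable `n`-tuples. -/
def Comps (n : ℕ) : Set (Fin n → G) :=
  {v | ∀ (j : Fin n) (h : (j : ℕ) + 1 < n), D.source (v j) = D.range (v ⟨(j : ℕ) + 1, h⟩)}

/-- The face maps of Matui's complex on tuples:
`d_0` drops the first entry, `d_{n+1}` drops the last one, and the intermediate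
`d_i` compose two consecutive entries. -/
def dface (n : ℕ) (i : Fin (n + 2)) (v : Fin (n + 1) → G) : Fin n → G := fun j =>
  if (j : ℕ) + 1 < (i : ℕ) then v j.castSucc
  else if (j : ℕ) + 1 = (i : ℕ) then D.mul (v j.castSucc) (v j.succ)
  else v j.succ

/-- The spaces of Matui's complex: `G^0` in degree `0`, and `G^(n)` in degree `n ≥ 1`. -/
def MSp : ℕ → Type u
  | 0 => ↥(D.unitSpace)
  | (n + 1) => ↥(D.Comps (n + 1))

instance [TopologicalSpace G] (n : ℕ) : TopologicalSpace (D.MSp n) := by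
  cases n with
  | zero => exact (inferInstance : TopologicalSpace ↥(D.unitSpace))
  | succ n => exact (inferInstance : TopologicalSpace ↥(D.Comps (n + 1)))

/-- The boundary maps of Matui's complex, given by alternating sums of pushforwards
along the face maps (in degree one, `∂₁ = s_* - r_*`). -/
def mBdry : (n : ℕ) → ((D.MSp (n + 1)) → ℤ) → (D.MSp n) → ℤ
  | 0, a => fun u =>
      (∑ᶠ x ∈ {x : ↥(D.Comps 1) | D.source (x.1 0) = u.1}, a x)
        - ∑ᶠ x ∈ {x : ↥(D.Comps 1) | D.range (x.1 0) = u.1}, a x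
  | (n + 1), a => fun y =>
      ∑ i : Fin (n + 3), (-1 : ℤ) ^ (i : ℕ) *
        ∑ᶠ x ∈ {x : ↥(D.Comps (n + 2)) | D.dface (n + 1) i x.1 = y.1}, a x

variable [TopologicalSpace G]

/-- The cycle subgroup of Matui's complex in degree `n`. -/
def mCycles : (n : ℕ) → AddSubgroup ((D.MSp n) → ℤ)
  | 0 => ccZSub (D.MSp 0)
  | (n + 1) => AddSubgroup.closure {a | a ∈ ccZ (D.MSp (n + 1)) ∧ D.mBdry n a = 0}

/-- The boundary subgroup of Matui's complex in degree `n`. -/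
def mBdries (n : ℕ) : AddSubgroup ((D.MSp n) → ℤ) :=
  AddSubgroup.closure {c | ∃ a ∈ ccZ (D.MSp (n + 1)), D.mBdry n a = c}

/-- The groupoid homology `H_n(G)` (Crainic–Moerdijk homology, computed by Matui's complex). -/
def Homology (n : ℕ) : Type u :=
  (D.mCycles n) ⧸ AddSubgroup.comap (D.mCycles n).subtype (D.mBdries n)

instance (n : ℕ) : AddCommGroup (D.Homology n) :=
  QuotientAddGroup.Quotient.addCommGroup _

/-- The homology class of a cycle. -/
def hcls {n : ℕ} (a : (D.MSp n) → ℤ) (ha : a ∈ D.mCycles n) : D.Homology n :=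
  QuotientAddGroup.mk ⟨a, ha⟩

end GroupoidData
namespace GroupoidData

variable {G : Type u} {D : GroupoidData G}
variable (D) in

/-- A colouring of an ample groupoid `G` with compact unit space: a finite ordered
collection `(G_0, …, G_d)` of compact open subgroupoids whose unit spaces cover `G⁰`. -/
structure Colouring [TopologicalSpace G] (d : ℕ) where
  sub : Fin (d + 1) → Set G
  isCompact : ∀ i, IsCompact (sub i)
  isOpen : ∀ i, IsOpen (sub i)
  inv_mem : ∀ i, ∀ g ∈ sub i, D.inv g ∈ sub i
  mul_mem : ∀ i, ∀ g h, g ∈ sub i → h ∈ sub i → D.source g = D.range h → D.mul g h ∈ sub i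
  source_mem : ∀ i, ∀ g ∈ sub i, D.source g ∈ sub i
  range_mem : ∀ i, ∀ g ∈ sub i, D.range g ∈ sub i
  covers : D.unitSpace ⊆ ⋃ i, (sub i ∩ D.unitSpace)

/-- A colouring is `K`-Lebesgue if for every unit `x` some colour `G_i` contains `G^x ∩ K`. -/
def Colouring.IsLebesgue [TopologicalSpace G] {D : GroupoidData G} {d : ℕ}
    (C : D.Colouring d) (K : Set G) : Prop :=
  ∀ x ∈ D.unitSpace, ∃ i, {g | D.range g = x} ∩ K ⊆ C.sub i

/-- A colouring is `K`-bounded if every colour is contained in `K`. -/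
def Colouring.IsBounded [TopologicalSpace G] {D : GroupoidData G} {d : ℕ}
    (C : D.Colouring d) (K : Set G) : Prop :=
  ∀ i, C.sub i ⊆ K

end GroupoidData

/-!
Enlarge `K` so that it contains `G⁰`, and apply the dimension bound to `K K⁻¹`. The resulting open
cover of `G⁰` can be shrunk to a cover by compact open sets `V i`, because compact open sets form a
basis. The `i`-th colour is the subgroupoid generated by `B = {g ∈ K | r(g) ∈ V i}`; it visibly
contains `G^x ∩ K` for all `x ∈ V i`, and it is open because products of open sets are open. For
compactness, cut a word in `B` and `B⁻¹` at its vertices in `V i`: this gives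
`⟨B⟩ ⊆ B⁻¹ ⟨B B⁻¹⟩ B`, and `⟨B B⁻¹⟩` is relatively compact by the choice of the cover. So `⟨B⟩` lies
in a compact set, whose range fibres have uniformly bounded cardinality `N`. The prefixes of a
shortest word are pairwise distinct and share one range, hence shortest words have length at
most `N`, and `⟨B⟩` is a finite union of compact sets of words.
-/

section Topology

variable {X Y Z : Type*} [TopologicalSpace X]

lemma isOpenMap_pullback_fst [TopologicalSpace Y] [TopologicalSpace Z] {f : X → Z} {g : Y → Z}
    (hf : Continuous f) (hg : IsOpenMap g) :
    IsOpenMap (Function.Pullback.fst : f.Pullback g → X) := by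
  rw [isOpenMap_iff_nhds_le]
  rintro ⟨⟨x, y⟩, hxy : f x = g y⟩ S hS
  obtain ⟨T, hT, hTS⟩ := mem_nhds_subtype _ _ _ |>.1 hS
  obtain ⟨U, hU, V, hV, hUV⟩ := mem_nhds_prod_iff.1 hT
  have hfV : f ⁻¹' (g '' V) ∈ nhds x :=
    hf.continuousAt.preimage_mem_nhds (hxy ▸ hg.image_mem_nhds hV)
  filter_upwards [hU, hfV] with x' hx' ⟨y', hy', hxy'⟩
  exact hTS (a := ⟨(x', y'), hxy'.symm⟩) (hUV ⟨hx', hy'⟩)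

lemma exists_forall_encard_inter_fiber_le {f : X → Y} (hf : IsLocallyInjective f) {C : Set X}
    (hC : IsCompact C) : ∃ N : ℕ, ∀ y, (C ∩ f ⁻¹' {y}).encard ≤ N := by
  refine hC.induction_on (p := fun s => ∃ N : ℕ, ∀ y, (s ∩ f ⁻¹' {y}).encard ≤ N)
    ⟨0, by simp⟩ ?mono ?union ?nhds
  case mono =>
    rintro s t hst ⟨N, hN⟩
    exact ⟨N, fun y => (encard_le_encard (inter_subset_inter_left _ hst)).trans (hN y)⟩
  case union =>
    rintro s t ⟨N, hN⟩ ⟨M, hM⟩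
    refine ⟨N + M, fun y => ?_⟩
    rw [union_inter_distrib_right, Nat.cast_add]
    exact (encard_union_le _ _).trans (add_le_add (hN y) (hM y))
  case nhds =>
    intro x _
    obtain ⟨U, hUo, hxU, hU⟩ := hf x
    refine ⟨U, mem_nhdsWithin_of_mem_nhds (hUo.mem_nhds hxU), 1, fun y => ?_⟩
    rw [Nat.cast_one, encard_le_one_iff]
    rintro a b ⟨ha, hay⟩ ⟨hb, hby⟩
    exact hU ha hb (hay.trans hby.symm)

lemma exists_isCompact_isOpen_iUnion_cover [PrespectralSpace X] {ι : Type*} {K : Set X}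
    (hK : IsCompact K) {U : ι → Set X} (hU : ∀ i, IsOpen (U i)) (hKU : K ⊆ ⋃ i, U i) :
    ∃ V : ι → Set X, (∀ i, IsCompact (V i)) ∧ (∀ i, IsOpen (V i)) ∧ (∀ i, V i ⊆ U i) ∧
      K ⊆ ⋃ i, V i := by
  let J := {p : ι × Set X // IsOpen p.2 ∧ IsCompact p.2 ∧ p.2 ⊆ U p.1}
  have hKJ : K ⊆ ⋃ p : J, p.1.2 := fun x hx => by
    obtain ⟨i, hxi⟩ := mem_iUnion.1 (hKU hx)
    obtain ⟨W, ⟨hWo, hWc⟩, hxW, hWU⟩ :=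
      PrespectralSpace.isTopologicalBasis.exists_subset_of_mem_open hxi (hU i)
    exact mem_iUnion.2 ⟨⟨(i, W), hWo, hWc, hWU⟩, hxW⟩
  obtain ⟨t, ht⟩ := hK.elim_finite_subcover (fun p : J => p.1.2) (fun p => p.2.1) hKJ
  refine ⟨fun i => ⋃ p ∈ t, ⋃ _ : p.1.1 = i, p.1.2,
    fun i => t.isCompact_biUnion fun p _ => isCompact_iUnion fun _ => p.2.2.1,
    fun i => isOpen_biUnion fun p _ => isOpen_iUnion fun _ => p.2.1,
    fun i => iUnion₂_subset fun p _ => iUnion_subset fun hpi => hpi ▸ p.2.2.2, fun x hx => ?_⟩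
  obtain ⟨p, hpt, hxp⟩ := mem_iUnion₂.1 (ht hx)
  exact mem_iUnion.2 ⟨p.1.1, mem_iUnion₂.2 ⟨p, hpt, mem_iUnion.2 ⟨rfl, hxp⟩⟩⟩

end Topology

namespace GroupoidData

variable {G : Type u} {D : GroupoidData G}

variable (D) in
/-- The algebraic laws of a groupoid, with no topology involved. Composition is a total function,
so every law about `D.mul g h` assumes that `g` and `h` are composable. -/
structure IsGroupoid : Prop where
  source_mem : ∀ g, D.source g ∈ D.unitSpace
  range_mem : ∀ g, D.range g ∈ D.unitSpace
  source_unit : ∀ x ∈ D.unitSpace, D.source x = x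
  range_unit : ∀ x ∈ D.unitSpace, D.range x = x
  source_mul : ∀ g h, D.source g = D.range h → D.source (D.mul g h) = D.source h
  range_mul : ∀ g h, D.source g = D.range h → D.range (D.mul g h) = D.range g
  mul_assoc : ∀ g h k, D.source g = D.range h → D.source h = D.range k →
      D.mul (D.mul g h) k = D.mul g (D.mul h k)
  source_inv : ∀ g, D.source (D.inv g) = D.range g
  range_inv : ∀ g, D.range (D.inv g) = D.source g
  inv_mul : ∀ g, D.mul (D.inv g) g = D.source g
  mul_inv : ∀ g, D.mul g (D.inv g) = D.range g
  unit_mul : ∀ g, D.mul (D.range g) g = g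
  mul_unit : ∀ g, D.mul g (D.source g) = g

namespace IsGroupoid

lemma inv_mul_cancel_left (h : D.IsGroupoid) {g k : G} (hgk : D.source g = D.range k) :
    D.mul (D.inv g) (D.mul g k) = k := by
  rw [← h.mul_assoc _ _ _ (h.source_inv g) hgk, h.inv_mul, hgk, h.unit_mul]

lemma mul_inv_cancel_right (h : D.IsGroupoid) {g k : G} (hgk : D.source g = D.range k) :
    D.mul (D.mul g k) (D.inv k) = g := by
  rw [h.mul_assoc _ _ _ hgk (h.range_inv k).symm, h.mul_inv, ← hgk, h.mul_unit]

lemma inv_mul_cancel_right (h : D.IsGroupoid) {g k : G} (hgk : D.source g = D.source k) :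
    D.mul (D.mul g (D.inv k)) k = g := by
  rw [h.mul_assoc _ _ _ (hgk.trans (h.range_inv k).symm) (h.source_inv k), h.inv_mul, ← hgk,
    h.mul_unit]

lemma eq_inv_of_mul_eq_range (h : D.IsGroupoid) {g k : G} (hgk : D.source g = D.range k)
    (hmul : D.mul g k = D.range g) : k = D.inv g := by
  rw [← h.inv_mul_cancel_left hgk, hmul, ← h.source_inv, h.mul_unit]

lemma inv_inv (h : D.IsGroupoid) (g : G) : D.inv (D.inv g) = g :=
  (h.eq_inv_of_mul_eq_range (h.source_inv g) (by rw [h.inv_mul, h.range_inv])).symm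

lemma mul_self_of_mem_unitSpace (h : D.IsGroupoid) {x : G} (hx : x ∈ D.unitSpace) :
    D.mul x x = x := by
  simpa only [h.source_unit x hx] using h.mul_unit x

lemma inv_of_mem_unitSpace (h : D.IsGroupoid) {x : G} (hx : x ∈ D.unitSpace) : D.inv x = x :=
  (h.eq_inv_of_mul_eq_range (by rw [h.source_unit x hx, h.range_unit x hx])
    (by rw [h.mul_self_of_mem_unitSpace hx, h.range_unit x hx])).symm

lemma mul_inv_rev (h : D.IsGroupoid) {g k : G} (hgk : D.source g = D.range k) :
    D.inv (D.mul g k) = D.mul (D.inv k) (D.inv g) := by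
  have hinv : D.source (D.inv k) = D.range (D.inv g) := by rw [h.source_inv, h.range_inv, hgk]
  have hcomp : D.source (D.mul g k) = D.range (D.inv k) := by rw [h.source_mul _ _ hgk, h.range_inv]
  refine (h.eq_inv_of_mul_eq_range ?_ ?_).symm
  · rw [hcomp, h.range_mul _ _ hinv]
  · rw [← h.mul_assoc _ _ _ hcomp hinv, h.mul_inv_cancel_right hgk, h.mul_inv, h.range_mul _ _ hgk]

end IsGroupoid

section SetMul

lemma setMul_mono {A A' B B' : Set G} (hA : A ⊆ A') (hB : B ⊆ B') :
    D.setMul A B ⊆ D.setMul A' B' := by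
  rintro _ ⟨a, ha, b, hb, hab, rfl⟩
  exact ⟨a, hA ha, b, hB hb, hab, rfl⟩

lemma IsGroupoid.setMul_assoc (h : D.IsGroupoid) (A B C : Set G) :
    D.setMul (D.setMul A B) C = D.setMul A (D.setMul B C) := by
  ext g
  constructor
  · rintro ⟨_, ⟨a, ha, b, hb, hab, rfl⟩, c, hc, hbc, rfl⟩
    rw [h.source_mul _ _ hab] at hbc
    exact ⟨a, ha, _, ⟨b, hb, c, hc, hbc, rfl⟩, hab.trans (h.range_mul _ _ hbc).symm,
      h.mul_assoc _ _ _ hab hbc⟩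
  · rintro ⟨a, ha, _, ⟨b, hb, c, hc, hbc, rfl⟩, hab, rfl⟩
    rw [h.range_mul _ _ hbc] at hab
    exact ⟨_, ⟨a, ha, b, hb, hab, rfl⟩, c, hc, (h.source_mul _ _ hab).trans hbc,
      (h.mul_assoc _ _ _ hab hbc).symm⟩

lemma IsGroupoid.image_inv_eq_preimage_inv (h : D.IsGroupoid) (A : Set G) :
    D.inv '' A = D.inv ⁻¹' A :=
  congrFun (image_eq_preimage_of_inverse h.inv_inv h.inv_inv) A

lemma IsGroupoid.preimage_inv_setMul (h : D.IsGroupoid) (A B : Set G) :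
    D.inv ⁻¹' D.setMul A B = D.setMul (D.inv ⁻¹' B) (D.inv ⁻¹' A) := by
  rw [← h.image_inv_eq_preimage_inv, ← h.image_inv_eq_preimage_inv, ← h.image_inv_eq_preimage_inv]
  have hcomp {a b : G} : D.source (D.inv b) = D.range (D.inv a) ↔ D.source a = D.range b := by
    rw [h.source_inv, h.range_inv, eq_comm]
  ext g
  constructor
  · rintro ⟨_, ⟨a, ha, b, hb, hab, rfl⟩, rfl⟩
    exact ⟨_, ⟨b, hb, rfl⟩, _, ⟨a, ha, rfl⟩, hcomp.2 hab, h.mul_inv_rev hab⟩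
  · rintro ⟨_, ⟨b, hb, rfl⟩, _, ⟨a, ha, rfl⟩, hba, rfl⟩
    exact ⟨_, ⟨a, ha, b, hb, hcomp.1 hba, rfl⟩, h.mul_inv_rev (hcomp.1 hba)⟩

lemma IsGroupoid.range_mem_setMul_preimage_inv (h : D.IsGroupoid) {A : Set G} {a : G}
    (ha : a ∈ A) : D.range a ∈ D.setMul A (D.inv ⁻¹' A) :=
  ⟨a, ha, D.inv a, by rwa [mem_preimage, h.inv_inv], (h.range_inv a).symm, (h.mul_inv a).symm⟩

lemma IsGroupoid.setMul_preimage_inv_inter_preimage_range_subset (h : D.IsGroupoid) (K V : Set G) :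
    D.setMul (K ∩ D.range ⁻¹' V) (D.inv ⁻¹' (K ∩ D.range ⁻¹' V)) ⊆
      {g ∈ D.setMul K (D.inv ⁻¹' K) | D.source g ∈ V ∧ D.range g ∈ V} := by
  rintro _ ⟨a, ⟨haK, haV⟩, b, ⟨hbK, hbV⟩, hab, rfl⟩
  refine ⟨⟨a, haK, b, hbK, hab, rfl⟩, ?_, ?_⟩
  · rwa [h.source_mul _ _ hab, ← h.range_inv]
  · rwa [h.range_mul _ _ hab]

end SetMul

section SetPow

variable (D) in
/-- The set of all products of `n + 1` composable elements of `A`. The index is shifted because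
`A` need not contain units. -/
def setPow (A : Set G) : ℕ → Set G
  | 0 => A
  | n + 1 => D.setMul (setPow A n) A

lemma IsGroupoid.setMul_setPow_setPow (h : D.IsGroupoid) (A : Set G) (m n : ℕ) :
    D.setMul (D.setPow A m) (D.setPow A n) = D.setPow A (m + n + 1) := by
  induction n with
  | zero => rfl
  | succ n ih => rw [setPow, ← h.setMul_assoc, ih]; rfl

lemma IsGroupoid.preimage_inv_setPow (h : D.IsGroupoid) (A : Set G) (n : ℕ) :
    D.inv ⁻¹' D.setPow A n = D.setPow (D.inv ⁻¹' A) n := by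
  induction n with
  | zero => rfl
  | succ n ih =>
    rw [setPow, h.preimage_inv_setMul, ih]
    exact (h.setMul_setPow_setPow (D.inv ⁻¹' A) 0 n).trans (by rw [zero_add])

/-- A prefix of a word of minimal length has minimal length, and the same range. -/
lemma IsGroupoid.antitone_range_image_disjointed_setPow (h : D.IsGroupoid) (A : Set G) :
    Antitone fun n => D.range '' disjointed (D.setPow A) n := by
  refine antitone_nat_of_succ_le fun n => ?_
  simp only [disjointed_eq_inter_compl]
  rintro _ ⟨_, ⟨⟨g, hg, a, ha, hga, rfl⟩, hmin⟩, rfl⟩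
  refine ⟨g, ⟨hg, mem_iInter₂.2 fun m hmn hgm => ?_⟩, (h.range_mul _ _ hga).symm⟩
  exact mem_iInter₂.1 hmin (m + 1) (Nat.succ_lt_succ hmn) ⟨g, hgm, a, ha, hga, rfl⟩

lemma IsGroupoid.iUnion_setPow_eq_biUnion_lt (h : D.IsGroupoid) {A C : Set G} {N : ℕ}
    (hAC : ∀ n, D.setPow A n ⊆ C) (hN : ∀ x, (C ∩ D.range ⁻¹' {x}).encard ≤ N) :
    ⋃ n, D.setPow A n = ⋃ n < N, D.setPow A n := by
  refine Subset.antisymm (fun g hg => ?_) (iUnion₂_subset fun n _ => subset_iUnion _ n)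
  rw [← iUnion_disjointed] at hg
  obtain ⟨n, hgn⟩ := mem_iUnion.1 hg
  have hp_exists (j : Fin (n + 1)) : ∃ p ∈ disjointed (D.setPow A) j, D.range p = D.range g :=
    h.antitone_range_image_disjointed_setPow A (Fin.is_le j) ⟨g, hgn, rfl⟩
  choose p hp hpg using hp_exists
  have hp_inj : Injective p := fun i j hij => Fin.ext <| by
    by_contra hne
    exact (disjoint_disjointed (D.setPow A) hne).notMem_of_mem_left (hp i) (hij ▸ hp j)
  have hp_sub : Set.range p ⊆ C ∩ D.range ⁻¹' {D.range g} := by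
    rintro _ ⟨j, rfl⟩
    exact ⟨hAC j (disjointed_subset _ _ (hp j)), hpg j⟩
  have hcard : ((n + 1 : ℕ) : ℕ∞) ≤ N := calc
    ((n + 1 : ℕ) : ℕ∞) = ENat.card (Fin (n + 1)) := by simp
    _ ≤ (Set.range p).encard := hp_inj.encard_range
    _ ≤ N := (encard_le_encard hp_sub).trans (hN _)
  exact mem_iUnion₂.2 ⟨n, Nat.cast_le.1 hcard, disjointed_subset _ _ hgn⟩

end SetPow

section Generated

variable (D) in
/-- The subgroupoid `⟨A⟩` generated by a set `A` of arrows, as a set. -/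
def generated (A : Set G) : Set G := {g | D.InSubgroupoid A g}

lemma subset_generated (A : Set G) : A ⊆ D.generated A := fun _ => .base

lemma setMul_generated_subset (A : Set G) :
    D.setMul (D.generated A) (D.generated A) ⊆ D.generated A := by
  rintro _ ⟨g, hg, k, hk, hgk, rfl⟩
  exact .mul hg hk hgk

lemma generated_subset {A S : Set G} (hA : A ⊆ S) (hinv : S ⊆ D.inv ⁻¹' S)
    (hmul : D.setMul S S ⊆ S) : D.generated A ⊆ S := by
  intro g hg
  induction hg with
  | base hg => exact hA hg
  | inv _ ih => exact hinv ih
  | mul _ _ hgk ihg ihk => exact hmul ⟨_, ihg, _, ihk, hgk, rfl⟩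

lemma generated_mono {A B : Set G} (hAB : A ⊆ B) : D.generated A ⊆ D.generated B :=
  generated_subset (hAB.trans (subset_generated B)) (fun _ => .inv) (setMul_generated_subset B)

lemma IsGroupoid.source_mem_generated (h : D.IsGroupoid) {A : Set G} {g : G}
    (hg : g ∈ D.generated A) : D.source g ∈ D.generated A :=
  h.inv_mul g ▸ .mul (.inv hg) hg (h.source_inv g)

lemma IsGroupoid.range_mem_generated (h : D.IsGroupoid) {A : Set G} {g : G}
    (hg : g ∈ D.generated A) : D.range g ∈ D.generated A :=
  h.mul_inv g ▸ .mul hg (.inv hg) (h.range_inv g).symm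

lemma IsGroupoid.generated_eq_iUnion_setPow (h : D.IsGroupoid) (A : Set G) :
    D.generated A = ⋃ n, D.setPow (A ∪ D.inv ⁻¹' A) n := by
  have hsymm : D.inv ⁻¹' (A ∪ D.inv ⁻¹' A) = A ∪ D.inv ⁻¹' A := by
    ext g
    simp only [mem_preimage, mem_union, h.inv_inv, or_comm]
  refine Subset.antisymm (generated_subset ?_ ?_ ?_) (iUnion_subset fun n => ?_)
  · exact subset_union_left.trans (subset_iUnion (D.setPow (A ∪ D.inv ⁻¹' A)) 0)
  · simp only [preimage_iUnion, h.preimage_inv_setPow, hsymm, Subset.rfl]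
  · rintro _ ⟨g, hg, k, hk, hgk, rfl⟩
    obtain ⟨m, hgm⟩ := mem_iUnion.1 hg
    obtain ⟨n, hkn⟩ := mem_iUnion.1 hk
    exact mem_iUnion.2 ⟨m + n + 1, h.setMul_setPow_setPow _ m n ▸ ⟨g, hgm, k, hkn, hgk, rfl⟩⟩
  · have hsub : A ∪ D.inv ⁻¹' A ⊆ D.generated A :=
      union_subset (subset_generated A) fun g hg => h.inv_inv g ▸ .inv (.base hg)
    induction n with
    | zero => exact hsub
    | succ n ih => exact (setMul_mono ih hsub).trans (setMul_generated_subset A)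

/-- The right-hand side `B⁻¹ ⟨B B⁻¹⟩ B` is closed under products because the factor `B B⁻¹` in
`(B⁻¹ ⟨B B⁻¹⟩ B) (B⁻¹ ⟨B B⁻¹⟩ B)` is absorbed by `⟨B B⁻¹⟩`. -/
lemma IsGroupoid.generated_subset_setMul_generated (h : D.IsGroupoid) {B : Set G}
    (hB : MapsTo D.range B B) :
    D.generated B ⊆ D.setMul (D.inv ⁻¹' B)
      (D.setMul (D.generated (D.setMul B (D.inv ⁻¹' B))) B) := by
  set H := D.generated (D.setMul B (D.inv ⁻¹' B))
  have hHH : D.setMul H H ⊆ H := setMul_generated_subset _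
  have hBH : D.setMul B (D.inv ⁻¹' B) ⊆ H := subset_generated _
  refine generated_subset ?_ ?_ ?_
  · intro b hb
    have hsource : D.source (D.range b) = D.range b := h.source_unit _ (h.range_mem b)
    have hinv : D.range b ∈ D.inv ⁻¹' B := by
      rw [mem_preimage, h.inv_of_mem_unitSpace (h.range_mem b)]
      exact hB hb
    exact ⟨_, hinv, b, ⟨_, hBH (h.range_mem_setMul_preimage_inv hb), b, hb, hsource,
      (h.unit_mul b).symm⟩, hsource, (h.unit_mul b).symm⟩
  · have hHinv : H ⊆ D.inv ⁻¹' H := fun _ => .inv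
    have hBinv : B ⊆ D.inv ⁻¹' (D.inv ⁻¹' B) := fun b hb => by
      rwa [mem_preimage, mem_preimage, h.inv_inv]
    rw [h.preimage_inv_setMul, h.preimage_inv_setMul, h.setMul_assoc]
    exact setMul_mono Subset.rfl (setMul_mono hHinv hBinv)
  · calc D.setMul (D.setMul (D.inv ⁻¹' B) (D.setMul H B)) (D.setMul (D.inv ⁻¹' B) (D.setMul H B))
        = D.setMul (D.inv ⁻¹' B)
            (D.setMul (D.setMul H (D.setMul (D.setMul B (D.inv ⁻¹' B)) H)) B) := by
          simp only [h.setMul_assoc]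
      _ ⊆ D.setMul (D.inv ⁻¹' B) (D.setMul H B) :=
          setMul_mono Subset.rfl (setMul_mono
            ((setMul_mono Subset.rfl ((setMul_mono hBH Subset.rfl).trans hHH)).trans hHH)
            Subset.rfl)

end Generated

variable [TopologicalSpace G]

variable (D) in
/-- A topological groupoid: a groupoid with continuous inversion and composition, the latter on
the subspace of composable pairs. -/
structure IsTopologicalGroupoid : Prop extends D.IsGroupoid where
  continuous_inv : Continuous D.inv
  continuous_mul : Continuous fun p : {p : G × G // D.source p.1 = D.range p.2} =>
      D.mul p.1.1 p.1.2

namespace IsTopologicalGroupoid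

lemma continuous_mul_comp (h : D.IsTopologicalGroupoid) {X : Type*} [TopologicalSpace X]
    {f g : X → G} (hf : Continuous f) (hg : Continuous g)
    (hfg : ∀ x, D.source (f x) = D.range (g x)) : Continuous fun x => D.mul (f x) (g x) :=
  h.continuous_mul.comp ((hf.prodMk hg).subtype_mk hfg)

lemma continuous_source (h : D.IsTopologicalGroupoid) : Continuous D.source := by
  simpa only [id, h.inv_mul] using
    h.continuous_mul_comp h.continuous_inv continuous_id h.source_inv

lemma continuous_range (h : D.IsTopologicalGroupoid) : Continuous D.range := by
  simpa only [id, h.mul_inv] using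
    h.continuous_mul_comp continuous_id h.continuous_inv fun g => (h.range_inv g).symm

lemma isCompact_preimage_inv (h : D.IsTopologicalGroupoid) {A : Set G} (hA : IsCompact A) :
    IsCompact (D.inv ⁻¹' A) :=
  h.image_inv_eq_preimage_inv A ▸ hA.image h.continuous_inv

lemma isCompact_setMul [T2Space G] (h : D.IsTopologicalGroupoid) {A B : Set G}
    (hA : IsCompact A) (hB : IsCompact B) : IsCompact (D.setMul A B) := by
  have hclosed : IsClosed {p : G × G | D.source p.1 = D.range p.2} :=
    isClosed_eq (h.continuous_source.comp continuous_fst) (h.continuous_range.comp continuous_snd)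
  convert (hclosed.isClosedEmbedding_subtypeVal.isCompact_preimage (hA.prod hB)).image
    h.continuous_mul
  ext g
  constructor
  · rintro ⟨a, ha, b, hb, hab, rfl⟩
    exact ⟨⟨(a, b), hab⟩, ⟨ha, hb⟩, rfl⟩
  · rintro ⟨⟨⟨a, b⟩, hab⟩, ⟨ha, hb⟩, rfl⟩
    exact ⟨a, ha, b, hb, hab, rfl⟩

/-- `A B` is the projection to the first coordinate of the open subset
`{(z, b) | z b⁻¹ ∈ A, b ∈ B}` of the fibre square of the source map. -/
lemma isOpen_setMul (h : D.IsTopologicalGroupoid) (hs : IsOpenMap D.source) {A B : Set G}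
    (hA : IsOpen A) (hB : IsOpen B) : IsOpen (D.setMul A B) := by
  have hcomp (p : D.source.Pullback D.source) : D.source p.fst = D.range (D.inv p.snd) :=
    p.2.trans (h.range_inv _).symm
  have hfst : Continuous (Pullback.fst : D.source.Pullback D.source → G) :=
    continuous_fst.comp continuous_subtype_val
  have hsnd : Continuous (Pullback.snd : D.source.Pullback D.source → G) :=
    continuous_snd.comp continuous_subtype_val
  have hdiv := h.continuous_mul_comp hfst (h.continuous_inv.comp hsnd) hcomp
  convert isOpenMap_pullback_fst h.continuous_source hs _
    ((hA.preimage hdiv).inter (hB.preimage hsnd))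
  ext g
  constructor
  · rintro ⟨a, ha, b, hb, hab, rfl⟩
    refine ⟨⟨(D.mul a b, b), h.source_mul _ _ hab⟩, ⟨?_, hb⟩, rfl⟩
    change D.mul (D.mul a b) (D.inv b) ∈ A
    rwa [h.mul_inv_cancel_right hab]
  · rintro ⟨p, ⟨hpA, hpB⟩, rfl⟩
    refine ⟨_, hpA, _, hpB, ?_, (h.inv_mul_cancel_right p.2).symm⟩
    exact (h.source_mul _ _ (hcomp p)).trans (h.source_inv _)

lemma isCompact_setPow [T2Space G] (h : D.IsTopologicalGroupoid) {A : Set G} (hA : IsCompact A)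
    (n : ℕ) : IsCompact (D.setPow A n) := by
  induction n with
  | zero => exact hA
  | succ n ih => exact h.isCompact_setMul ih hA

lemma isOpen_setPow (h : D.IsTopologicalGroupoid) (hs : IsOpenMap D.source) {A : Set G}
    (hA : IsOpen A) (n : ℕ) : IsOpen (D.setPow A n) := by
  induction n with
  | zero => exact hA
  | succ n ih => exact h.isOpen_setMul hs ih hA

lemma isOpen_generated (h : D.IsTopologicalGroupoid) (hs : IsOpenMap D.source) {A : Set G}
    (hA : IsOpen A) : IsOpen (D.generated A) := by
  rw [h.generated_eq_iUnion_setPow]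
  exact isOpen_iUnion (h.isOpen_setPow hs (hA.union (hA.preimage h.continuous_inv)))

lemma isCompact_generated_of_subset [T2Space G] (h : D.IsTopologicalGroupoid)
    (hr : IsLocallyInjective D.range) {A C : Set G} (hA : IsCompact A) (hC : IsCompact C)
    (hAC : D.generated A ⊆ C) : IsCompact (D.generated A) := by
  rw [h.generated_eq_iUnion_setPow] at hAC ⊢
  obtain ⟨N, hN⟩ := exists_forall_encard_inter_fiber_le hr hC
  rw [h.iUnion_setPow_eq_biUnion_lt (iUnion_subset_iff.1 hAC) hN]
  exact (finite_lt_nat N).isCompact_biUnion fun n _ =>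
    h.isCompact_setPow (hA.union (h.isCompact_preimage_inv hA)) n

lemma isCompact_generated_of_setMul_preimage_inv_subset [T2Space G]
    (h : D.IsTopologicalGroupoid) (hr : IsLocallyInjective D.range) {B C : Set G}
    (hB : IsCompact B) (hBr : MapsTo D.range B B) (hC : IsCompact C)
    (hBC : D.generated (D.setMul B (D.inv ⁻¹' B)) ⊆ C) : IsCompact (D.generated B) :=
  h.isCompact_generated_of_subset hr hB
    (h.isCompact_setMul (h.isCompact_preimage_inv hB) (h.isCompact_setMul hC hB))
    ((h.generated_subset_setMul_generated hBr).trans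
      (setMul_mono Subset.rfl (setMul_mono hBC Subset.rfl)))

end IsTopologicalGroupoid

namespace IsAmpleGroupoid

lemma isTopologicalGroupoid (h : D.IsAmpleGroupoid) : D.IsTopologicalGroupoid := { h with }

lemma prespectralSpace (h : D.IsAmpleGroupoid) : PrespectralSpace G where
  isTopologicalBasis := by
    refine TopologicalSpace.isTopologicalBasis_of_isOpen_of_nhds (fun _ hU => hU.1)
      fun g U hg hU => ?_
    obtain ⟨B, hgB, hBU, hBo, hBc, -⟩ := h.ample g U hU hg
    exact ⟨B, ⟨hBo, hBc⟩, hgB, hBU⟩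

lemma exists_cover_isCompact_generated (h : D.IsAmpleGroupoid) (hcpt : IsCompact D.unitSpace)
    {d : ℕ} (hdad : D.DadLE d) {K : Set G} (hKc : IsCompact K) (hKo : IsOpen K)
    (hK : D.unitSpace ⊆ K) :
    ∃ V : Fin (d + 1) → Set G, (∀ i, IsOpen (V i)) ∧ D.unitSpace ⊆ ⋃ i, V i ∧
      ∀ i, IsCompact (D.generated (K ∩ D.range ⁻¹' V i)) := by
  have hG := h.isTopologicalGroupoid
  have := h.t2
  have := h.prespectralSpace
  obtain ⟨U, hU, hcover, hgen⟩ := hdad (D.setMul K (D.inv ⁻¹' K))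
    (hG.isOpen_setMul h.etale_source.isOpenMap hKo (hKo.preimage hG.continuous_inv))
    (hG.isCompact_setMul hKc (hG.isCompact_preimage_inv hKc)).closure
  have hunits : D.unitSpace ⊆ ⋃ i, U i := fun x hx => by
    have hxL := hG.range_mem_setMul_preimage_inv (hK hx)
    rw [hG.range_unit x hx] at hxL
    exact hcover (.inl ⟨x, hxL, hG.range_unit x hx⟩)
  obtain ⟨V, hVc, hVo, hVU, hunitsV⟩ :=
    exists_isCompact_isOpen_iUnion_cover hcpt (fun i => (hU i).1) hunits
  refine ⟨V, hVo, hunitsV, fun i => ?_⟩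
  refine hG.isCompact_generated_of_setMul_preimage_inv_subset h.etale_range.isLocallyInjective
    (hKc.inter_right ((hVc i).isClosed.preimage hG.continuous_range)) ?_ (hgen i) ?_
  · rintro b ⟨-, hb⟩
    exact ⟨hK (hG.range_mem b), by rwa [mem_preimage, hG.range_unit _ (hG.range_mem b)]⟩
  · refine Subset.trans (generated_mono ?_) subset_closure
    exact (hG.setMul_preimage_inv_inter_preimage_range_subset K (V i)).trans
      fun g hg => ⟨hg.1, hVU i hg.2.1, hVU i hg.2.2⟩

end IsAmpleGroupoid

end GroupoidData

/-- Let `G` be an ample groupoid with compact unit space whose dynamic asymptotic dimension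
is at most `d`.  Then for every compact open subset `K ⊆ G` there exists a `K`-Lebesgue
colouring of `G` with at most `d + 1` elements. -/
theorem exists_lebesgue_colouring_of_dad
    {G : Type u} [TopologicalSpace G] (D : GroupoidData G)
    (hAmple : D.IsAmpleGroupoid) (hcpt : IsCompact D.unitSpace)
    (d : ℕ) (hdad : D.DadLE d) :
    ∀ K : Set G, IsCompact K → IsOpen K →
      ∃ (e : ℕ), e ≤ d ∧ ∃ C : D.Colouring e, C.IsLebesgue K := by
  intro K hKc hKo
  have hG := hAmple.isTopologicalGroupoid
  obtain ⟨V, hVo, hunits, hcompact⟩ := hAmple.exists_cover_isCompact_generated hcpt hdad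
    (hKc.union hcpt) (hKo.union hAmple.open_unitSpace) subset_union_right
  refine ⟨d, le_rfl, ⟨fun i => D.generated ((K ∪ D.unitSpace) ∩ D.range ⁻¹' V i), hcompact,
    fun i => ?_, fun _ _ => .inv, fun _ _ _ => .mul, fun _ _ => hG.source_mem_generated,
    fun _ _ => hG.range_mem_generated, fun x hx => ?_⟩, fun x hx => ?_⟩
  · exact hG.isOpen_generated hAmple.etale_source.isOpenMap
      ((hKo.union hAmple.open_unitSpace).inter ((hVo i).preimage hG.continuous_range))
  · obtain ⟨i, hxi⟩ := mem_iUnion.1 (hunits hx)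
    have hrange : D.range x ∈ V i := (hG.range_unit x hx).symm ▸ hxi
    exact mem_iUnion.2 ⟨i, .base ⟨.inr hx, hrange⟩, hx⟩
  · obtain ⟨i, hxi⟩ := mem_iUnion.1 (hunits hx)
    refine ⟨i, ?_⟩
    rintro g ⟨rfl, hgK⟩
    exact .base ⟨.inl hgK, hxi⟩
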